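/- Let Σ_A(ℕ) be a topologically mixing, finitely primitive (BIP) countable Markov shift and f : Σ_A(ℕ) → ℝ satisfy the Walters condition with Var_1 f < ∞ and P(f) < ∞. Suppose f has a unique maximizing measure μ. Then for any fixed point a ∈ supp(μ) and every bounded continuous calibrated sub-action V for f, V(x) = V(a) + S_f(a,x) for all x ∈ Σ_A(ℕ). In particular, any two bounded calibrated sub-actions for f differ by a constant. -/

import Mathlib

open Filter Topology MeasureTheory
open scoped ENNReal

/-- The countable Markov shift over alphabet ℕ determined by the 0-1 matrix `A`. -/
def MarkovShift (A : ℕ → ℕ → Bool) : Type :=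
  {x : ℕ → ℕ // ∀ i, A (x i) (x (i + 1)) = true}

namespace MarkovShift

variable {A : ℕ → ℕ → Bool}

instance : TopologicalSpace (MarkovShift A) :=
  instTopologicalSpaceSubtype

instance : MeasurableSpace (MarkovShift A) := borel _

instance : BorelSpace (MarkovShift A) := ⟨rfl⟩

/-- The shift map. -/
def shift (x : MarkovShift A) : MarkovShift A :=
  ⟨fun n => x.1 (n + 1), fun i => x.2 (i + 1)⟩

/-- The cylinder set determined by a finite word. -/
def cylinder (w : List ℕ) : Set (MarkovShift A) :=
  {x | ∀ i : Fin w.length, x.1 i = w.get i}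

/-- The cylinder set determined by the first `m` coordinates of `x`. -/
def cylOf (x : MarkovShift A) (m : ℕ) : Set (MarkovShift A) :=
  {y | ∀ i < m, y.1 i = x.1 i}

/-- A symbol is admissible when its cylinder is nonempty. -/
def Admissible (A : ℕ → ℕ → Bool) (a : ℕ) : Prop :=
  ∃ x : MarkovShift A, x.1 0 = a

/-- Topologically mixing. -/
def TopologicallyMixing (A : ℕ → ℕ → Bool) : Prop :=
  ∀ a b : ℕ, Admissible A a → Admissible A b →
    ∃ N : ℕ, ∀ n ≥ N, ∃ x : MarkovShift A, x.1 0 = a ∧ (shift^[n] x).1 0 = b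

/-- Finitely primitive (BIP). -/
def FinitelyPrimitive (A : ℕ → ℕ → Bool) : Prop :=
  ∃ (K₀ : ℕ) (F : Finset ℕ), ∀ a b : ℕ, Admissible A a → Admissible A b →
    ∃ w : List ℕ, w.length = K₀ ∧ (∀ c ∈ w, c ∈ F) ∧
      List.Chain' (fun u v => A u v = true) (a :: (w ++ [b]))

/-- First coordinate where two distinct points disagree. -/
noncomputable def firstDiff (x y : MarkovShift A) (h : x ≠ y) : ℕ :=
  Nat.find (Function.ne_iff.mp (fun hxy : x.1 = y.1 => h (Subtype.ext hxy)))

open Classical in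
/-- The metric `d(x,y) = r^{t(x,y)}`. -/
noncomputable def dist' (r : ℝ) (x y : MarkovShift A) : ℝ :=
  if h : x = y then 0 else r ^ firstDiff x y h

/-- Birkhoff sum `S_n f`. -/
def birkhoff (f : MarkovShift A → ℝ) (n : ℕ) (x : MarkovShift A) : ℝ :=
  ∑ j ∈ Finset.range n, f (shift^[j] x)

/-- The set of values `|S_n f x - S_n f y|` over pairs agreeing on the first `m` coordinates. -/
def varSet (f : MarkovShift A → ℝ) (n m : ℕ) : Set ℝ :=
  {c | ∃ x y : MarkovShift A, (∀ i < m, x.1 i = y.1 i) ∧ c = |birkhoff f n x - birkhoff f n y|}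

/-- `Var_m (S_n f)`. -/
noncomputable def varBirk (f : MarkovShift A → ℝ) (n m : ℕ) : ℝ := sSup (varSet f n m)

/-- `Var_1 f < ∞`. -/
def Var1Finite (f : MarkovShift A → ℝ) : Prop := BddAbove (varSet f 1 1)

/-- The set whose supremum is `sup_{n ≥ 1} Var_{n+k}(S_n f)`. -/
def waltersSet (f : MarkovShift A → ℝ) (k : ℕ) : Set ℝ :=
  {c | ∃ n, 1 ≤ n ∧ c ∈ varSet f n (n + k)}

/-- `M_k = sup_{n ≥ 1} Var_{n+k}(S_n f)`. -/
noncomputable def waltersSup (f : MarkovShift A → ℝ) (k : ℕ) : ℝ := sSup (waltersSet f k)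

/-- The Walters condition. -/
def SatisfiesWalters (f : MarkovShift A → ℝ) : Prop :=
  (∀ k, 1 ≤ k → BddAbove (waltersSet f k)) ∧
    Tendsto (fun k => waltersSup f k) atTop (𝓝 0)

/-- The partition function `Z_n(f,a) = Σ_{σ^n x = x, x₀ = a} e^{S_n f (x)}`. -/
noncomputable def partitionSum (f : MarkovShift A → ℝ) (n : ℕ) (a : ℕ) : ℝ :=
  ∑' x : {x : MarkovShift A // shift^[n] x = x ∧ x.1 0 = a}, Real.exp (birkhoff f n x.1)

/-- `f` has (finite) Gurevich pressure `p`. -/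
def HasGurevichPressure (f : MarkovShift A → ℝ) (p : ℝ) : Prop :=
  ∀ a : ℕ, Admissible A a →
    (∀ n, 1 ≤ n → Summable fun x : {x : MarkovShift A // shift^[n] x = x ∧ x.1 0 = a} =>
        Real.exp (birkhoff f n x.1)) ∧
    Tendsto (fun n : ℕ => (1 / (n : ℝ)) * Real.log (partitionSum f n a)) atTop (𝓝 p)

/-- σ-invariant Borel probability measure. -/
def IsInvariantProb (μ : Measure (MarkovShift A)) : Prop :=
  IsProbabilityMeasure μ ∧ μ.map shift = μ

/-- `m(f)`, the maximal ergodic average. -/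
noncomputable def mf (f : MarkovShift A → ℝ) : ℝ :=
  sSup {c | ∃ μ : Measure (MarkovShift A),
    IsInvariantProb μ ∧ Integrable f μ ∧ ∫ x, f x ∂μ = c}

/-- A maximizing measure for `f`. -/
def IsMaximizing (f : MarkovShift A → ℝ) (μ : Measure (MarkovShift A)) : Prop :=
  IsInvariantProb μ ∧ Integrable f μ ∧ ∫ x, f x ∂μ = mf f

/-- Bounded real valued function. -/
def BoundedFun (g : MarkovShift A → ℝ) : Prop := ∃ C, ∀ x, |g x| ≤ C

/-- A bounded calibrated sub-action for `f`. -/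
def IsCalibratedSubaction (f V : MarkovShift A → ℝ) : Prop :=
  Continuous V ∧ BoundedFun V ∧
    (∀ x, f x + V x - V (shift x) - mf f ≤ 0) ∧
    (∀ y, ∃ x, shift x = y ∧ f x + V x - V (shift x) - mf f = 0)

/-- The Ruelle transfer operator `(L_g u)(x) = Σ_{σ y = x} e^{g(y)} u(y)`. -/
noncomputable def ruelle (g u : MarkovShift A → ℝ) (x : MarkovShift A) : ℝ :=
  ∑' y : {y : MarkovShift A // shift y = x}, Real.exp (g y.1) * u y.1

/-- Ruelle-Perron-Frobenius data for the potential `f` with pressure `p`: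
eigenfunction `h`, eigenmeasure `ν`. -/
def IsRPF (f : MarkovShift A → ℝ) (p : ℝ) (h : MarkovShift A → ℝ)
    (ν : Measure (MarkovShift A)) : Prop :=
  Continuous h ∧ (∀ x, 0 < h x) ∧
    (∀ x, ruelle f h x = Real.exp p * h x) ∧
    IsProbabilityMeasure ν ∧
    (∀ g : MarkovShift A → ℝ, Continuous g → BoundedFun g →
      ∫ x, ruelle f g x ∂ν = Real.exp p * ∫ x, g x ∂ν) ∧
    ∫ x, h x ∂ν = 1

/-- The Gibbs measure `dμ = h dν`. -/
noncomputable def gibbs (h : MarkovShift A → ℝ) (ν : Measure (MarkovShift A)) :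
    Measure (MarkovShift A) :=
  ν.withDensity fun x => ENNReal.ofReal (h x)

/-- The Mañé potential `S_f(x,y)` (with respect to the metric of parameter `r`). -/
noncomputable def manePot (r : ℝ) (f : MarkovShift A → ℝ) (x y : MarkovShift A) : EReal :=
  ⨅ ε : {ε : ℝ // 0 < ε}, ⨆ n : {n : ℕ // 1 ≤ n},
    ⨆ _z : {z : MarkovShift A // dist' r x z < ε.1 ∧ shift^[n.1] z = y},
      ((birkhoff (fun w => f w - mf f) n.1 _z.1 : ℝ) : EReal)

/-- The (topological) support of a measure. -/
def msupport (μ : Measure (MarkovShift A)) : Set (MarkovShift A) :=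
  {x | ∀ U : Set (MarkovShift A), IsOpen U → x ∈ U → 0 < μ U}

end MarkovShift

namespace MarkovShift

section aux

variable {A : ℕ → ℕ → Bool}

/-- Empirical averages on a compact space have a limit measure along an ultrafilter. -/
theorem exists_limit_measure {X : Type*} [TopologicalSpace X] [CompactSpace X] [T2Space X]
    [MeasurableSpace X] [BorelSpace X] (y : ℕ → X) :
    ∃ ν : Measure X, IsProbabilityMeasure ν ∧ ∃ L : Filter ℕ, L.NeBot ∧ L ≤ atTop ∧
      ∀ g : C(X, ℝ), Tendsto (fun n : ℕ => ((n : ℝ) + 1)⁻¹ * ∑ k ∈ Finset.range (n + 1), g (y k))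
        L (𝓝 (∫ x, g x ∂ν)) := by
  classical
  have hp : ∀ n : ℕ, IsProbabilityMeasure
      ((((n + 1 : ℕ) : ℝ≥0∞)⁻¹) • ∑ k ∈ Finset.range (n + 1), Measure.dirac (y k)) := by
    intro n
    constructor
    simp only [Measure.smul_apply, Measure.finsetSum_apply, measure_univ, Finset.sum_const,
      Finset.card_range, smul_eq_mul, nsmul_eq_mul, mul_one]
    exact ENNReal.inv_mul_cancel (by simp) (by simp)
  let e : ℕ → ProbabilityMeasure X := fun n => ⟨_, hp n⟩
  let U : Ultrafilter ℕ := Filter.hyperfilter ℕ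
  obtain ⟨ν, -, hν⟩ := (isCompact_univ (X := ProbabilityMeasure X)).ultrafilter_le_nhds
    (U.map e) (by simp)
  refine ⟨ν, inferInstance, U, inferInstance, ?_, ?_⟩
  · exact Nat.hyperfilter_le_atTop
  · intro g
    have h1 : Tendsto e U (𝓝 ν) := hν
    have h2 := (ProbabilityMeasure.tendsto_iff_forall_integral_tendsto.1 h1)
      (BoundedContinuousFunction.mkOfCompact g)
    refine Tendsto.congr ?_ h2
    intro n
    change ∫ x, g x ∂((((n + 1 : ℕ) : ℝ≥0∞)⁻¹) • ∑ k ∈ Finset.range (n + 1), Measure.dirac (y k)) = _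
    rw [integral_smul_measure, integral_finsetSum_measure]
    · simp [integral_dirac' _ _ g.continuous.stronglyMeasurable, ENNReal.toReal_add]
    · intro i _
      exact (BoundedContinuousFunction.mkOfCompact g).integrable _

theorem shift_iter_val (x : MarkovShift A) (n i : ℕ) : (shift^[n] x).1 i = x.1 (i + n) := by
  induction n generalizing x with
  | zero => rfl
  | succ n ih => rw [Function.iterate_succ_apply, ih]; show x.1 _ = _; congr 1; 

theorem continuous_val : Continuous (fun x : MarkovShift A => x.1) := continuous_subtype_val

theorem continuous_shift : Continuous (shift : MarkovShift A → MarkovShift A) := by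
  refine Continuous.subtype_mk ?_ _
  refine continuous_pi fun n => ?_
  exact (continuous_apply (n + 1)).comp continuous_val

theorem isOpen_cylOf (a : MarkovShift A) (m : ℕ) : IsOpen (cylOf a m) := by
  have : cylOf a m = (fun x : MarkovShift A => x.1) ⁻¹' (PiNat.cylinder a.1 m) := by
    ext y; rfl
  rw [this]
  exact (PiNat.isOpen_cylinder (fun _ => ℕ) a.1 m).preimage continuous_val

theorem isClosed_cylOf (a : MarkovShift A) (m : ℕ) : IsClosed (cylOf a m) := by
  have : cylOf a m = ⋂ i, ⋂ (_ : i < m), {y : MarkovShift A | y.1 i = a.1 i} := by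
    ext y; simp [cylOf]
  rw [this]
  refine isClosed_iInter fun i => isClosed_iInter fun _ => ?_
  exact isClosed_eq ((continuous_apply i).comp continuous_val) continuous_const

theorem exists_cylOf_subset (a : MarkovShift A) (U : Set (MarkovShift A)) (hU : U ∈ 𝓝 a) :
    ∃ m, cylOf a m ⊆ U := by
  obtain ⟨W, hW, hWU⟩ := mem_nhds_subtype _ _ _ |>.1 hU
  obtain ⟨s, ⟨x, n, rfl⟩, hx, hs⟩ :=
    (PiNat.isTopologicalBasis_cylinders (fun _ => ℕ)).mem_nhds_iff.1 hW
  refine ⟨n, fun y hy => hWU (hs ?_)⟩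
  intro i hi
  rw [hy i hi]; exact hx i hi

theorem cylOf_mono (a : MarkovShift A) {m n : ℕ} (h : m ≤ n) : cylOf a n ⊆ cylOf a m :=
  fun _ hy i hi => hy i (hi.trans_le h)

theorem mem_cylOf_of_dist_lt {r : ℝ} (hr0 : 0 < r) (hr1 : r < 1) {a z : MarkovShift A} {m : ℕ}
    (h : dist' r a z < r ^ m) : z ∈ cylOf a m := by
  unfold dist' at h
  split_ifs at h with hz
  · subst hz; intro i _; rfl
  · have h2 : m < firstDiff a z hz := (pow_lt_pow_iff_right_of_lt_one₀ hr0 hr1).1 h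
    intro i hi
    by_contra hne
    exact Nat.find_min _ (hi.trans h2) (Ne.symm hne)

theorem dist_le_of_mem_cylOf {r : ℝ} (hr0 : 0 < r) (hr1 : r < 1) {a z : MarkovShift A} {m : ℕ}
    (h : z ∈ cylOf a m) : dist' r a z ≤ r ^ m := by
  unfold dist'
  split_ifs with hz
  · positivity
  · have : m ≤ firstDiff a z hz := by
      refine (Nat.le_find_iff _ _).2 fun i hi hne => hne (h i hi).symm
    exact pow_le_pow_of_le_one hr0.le hr1.le this

theorem continuous_of_walters {f : MarkovShift A → ℝ} (hW : SatisfiesWalters f) :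
    Continuous f := by
  rw [continuous_iff_continuousAt]
  intro a
  rw [ContinuousAt, Metric.tendsto_nhds]
  intro ε hε
  obtain ⟨k, hk1, hk⟩ := ((hW.2.eventually (gt_mem_nhds hε)).and (eventually_ge_atTop 1)).exists
  refine Filter.mem_of_superset ((isOpen_cylOf a (1 + k)).mem_nhds (fun _ _ => rfl)) ?_
  intro z hz
  have : |f z - f a| ∈ waltersSet f k := ⟨1, le_rfl, z, a, hz, by simp [birkhoff]⟩
  have := le_csSup (hW.1 k hk) this
  show dist (f z) (f a) < ε
  rw [Real.dist_eq]
  exact this.trans_lt hk1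

theorem birkhoff_le_of_subaction {f V : MarkovShift A → ℝ}
    (hV : ∀ x, f x + V x - V (shift x) - mf f ≤ 0) (n : ℕ) (z : MarkovShift A) :
    birkhoff (fun w => f w - mf f) n z ≤ V (shift^[n] z) - V z := by
  induction n with
  | zero => simp [birkhoff]
  | succ n ih =>
    have h := hV (shift^[n] z)
    rw [Function.iterate_succ_apply']
    unfold birkhoff at *
    rw [Finset.sum_range_succ]
    linarith

theorem birkhoff_eq_of_backward {f V : MarkovShift A → ℝ} (y : ℕ → MarkovShift A)
    (hy : ∀ n, shift (y (n + 1)) = y n)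
    (hV : ∀ n, f (y (n + 1)) + V (y (n + 1)) - V (y n) - mf f = 0) (n : ℕ) :
    birkhoff (fun w => f w - mf f) n (y n) = V (y 0) - V (y n) ∧ shift^[n] (y n) = y 0 := by
  induction n with
  | zero => simp [birkhoff]
  | succ n ih =>
    have h := hV n
    constructor
    · have : birkhoff (fun w => f w - mf f) (n + 1) (y (n + 1)) =
          birkhoff (fun w => f w - mf f) n (y n) + (f (y (n + 1)) - mf f) := by
        unfold birkhoff
        rw [Finset.sum_range_succ']
        simp [Function.iterate_succ_apply, hy]
      rw [this, ih.1]; linarith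
    · rw [Function.iterate_succ_apply, hy]; exact ih.2

theorem exists_periodic (u : ℕ → ℕ) (n : ℕ) (hn : 1 ≤ n)
    (h : ∀ j < n, A (u j) (u (j + 1)) = true) (h0 : u n = u 0) :
    ∃ x : MarkovShift A, ∀ i, x.1 i = u (i % n) := by
  refine ⟨⟨fun i => u (i % n), fun i => ?_⟩, fun i => rfl⟩
  have hlt : i % n < n := Nat.mod_lt _ hn
  have h1 := h (i % n) hlt
  by_cases hc : i % n + 1 = n
  · have : (i + 1) % n = 0 := by
      rw [Nat.add_mod, ← Nat.mod_add_mod]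
      simp [hc]
    simp only [this]
    rw [hc, h0] at h1
    exact h1
  · have : (i + 1) % n = i % n + 1 := by
      rw [← Nat.mod_add_mod]
      exact Nat.mod_eq_of_lt (by omega)
    simp only [this]
    exact h1

theorem exists_fun_of_bip {K₀ : ℕ} {F : Finset ℕ} {a b : ℕ}
    (h : ∃ w : List ℕ, w.length = K₀ ∧ (∀ c ∈ w, c ∈ F) ∧
      List.IsChain (fun u v => A u v = true) (a :: (w ++ [b]))) :
    ∃ v : ℕ → ℕ, v 0 = a ∧ v (K₀ + 1) = b ∧ (∀ j, 1 ≤ j → j ≤ K₀ → v j ∈ F) ∧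
      ∀ j ≤ K₀, A (v j) (v (j + 1)) = true := by
  obtain ⟨w, rfl, hF, hc⟩ := h
  refine ⟨fun j => (a :: (w ++ [b])).getD j 0, by simp, by simp, ?_, ?_⟩
  · intro j h1 h2
    obtain ⟨j, rfl⟩ : ∃ k, j = k + 1 := ⟨j - 1, by omega⟩
    apply hF
    have : j < w.length := by omega
    simp [List.getElem?_append_left this, List.getElem?_eq_getElem this]
  · intro j hj
    have h1 : j + 1 < (a :: (w ++ [b])).length := by simp; omega
    have := List.isChain_iff_getElem.1 hc j h1
    beta_reduce
    rw [List.getD_eq_getElem _ _ h1, List.getD_eq_getElem _ _ (by omega)]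
    exact this

theorem coercive (hbip : FinitelyPrimitive A) {f : MarkovShift A → ℝ} (hVar1 : Var1Finite f)
    {p : ℝ} (hP : HasGurevichPressure f p) (x₀ : MarkovShift A) (t : ℝ) :
    ∃ G : Finset ℕ, ∀ z : MarkovShift A, t ≤ f z → z.1 0 ∈ G := by
  classical
  obtain ⟨K₀, F, hF⟩ := hbip
  obtain ⟨D, hD⟩ := hVar1
  have hD' : ∀ x y : MarkovShift A, x.1 0 = y.1 0 → f x - D ≤ f y := by
    intro x y hxy
    have : |f x - f y| ≤ D := hD ⟨x, y, fun i hi => by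
      obtain rfl : i = 0 := by omega
      exact hxy, by simp [birkhoff]⟩
    have := (abs_le.1 this).2
    linarith
  set a := x₀.1 0 with ha
  have haA : Admissible A a := ⟨x₀, rfl⟩
  have hlow : ∀ c, ∃ B : ℝ, ∀ z : MarkovShift A, z.1 0 = c → B ≤ f z := by
    intro c
    by_cases hc : Admissible A c
    · obtain ⟨x, hx⟩ := hc
      exact ⟨f x - D, fun z hz => hD' x z (hx.trans hz.symm)⟩
    · exact ⟨0, fun z hz => (hc ⟨z, hz⟩).elim⟩
  choose Bc hBc using hlow
  obtain ⟨B, hB⟩ : ∃ B, ∀ c ∈ insert a F, B ≤ Bc c := by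
    obtain ⟨B, hB⟩ := ((insert a F).image Bc).bddBelow
    exact ⟨B, fun c hc => hB (by simpa using Finset.mem_image_of_mem Bc hc)⟩
  set n := 2 * K₀ + 2 with hn
  have hper : ∀ b : {b // Admissible A b}, ∃ x : MarkovShift A,
      (shift^[n] x = x ∧ x.1 0 = a) ∧ x.1 (K₀ + 1) = b.1 ∧
        ∀ j < n, j ≠ K₀ + 1 → x.1 j ∈ insert a F := by
    rintro ⟨b, hb⟩
    obtain ⟨v1, h10, h1b, h1F, h1A⟩ := exists_fun_of_bip (hF a b haA hb)
    obtain ⟨v2, h20, h2b, h2F, h2A⟩ := exists_fun_of_bip (hF b a hb haA)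
    let u : ℕ → ℕ := fun j => if j ≤ K₀ then v1 j else v2 (j - (K₀ + 1))
    have hu1 : ∀ j ≤ K₀, u j = v1 j := fun j hj => by simp [u, hj]
    have hu2 : ∀ j, u (j + (K₀ + 1)) = v2 j := fun j => by
      simp only [u]
      rw [if_neg (by omega)]
      congr 1
      omega
    obtain ⟨x, hx⟩ := exists_periodic (A := A) u n (by omega) (by
      intro j hj
      rcases lt_trichotomy j K₀ with h | h | h
      · rw [hu1 j h.le, hu1 (j + 1) h]; exact h1A j h.le
      · subst h
        have := hu2 0
        rw [zero_add] at this
        rw [hu1 j le_rfl, this, h20, ← h1b]; exact h1A j le_rfl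
      · obtain ⟨k, rfl⟩ : ∃ k, j = k + (K₀ + 1) := ⟨j - (K₀ + 1), by omega⟩
        rw [hu2, show k + (K₀ + 1) + 1 = (k + 1) + (K₀ + 1) by ring, hu2]
        exact h2A k (by omega)) (by
      rw [show n = (K₀ + 1) + (K₀ + 1) by omega, hu2, h2b, hu1 0 (by omega), h10])
    have hxlt : ∀ j < n, x.1 j = u j := fun j hj => by rw [hx, Nat.mod_eq_of_lt hj]
    refine ⟨x, ⟨?_, ?_⟩, ?_, ?_⟩
    · apply Subtype.ext
      funext i
      rw [shift_iter_val, hx, hx]; simp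
    · rw [hxlt 0 (by omega), hu1 0 (by omega), h10]
    · rw [hxlt _ (by omega)]
      have := hu2 0
      rw [zero_add] at this
      rw [this, h20]
    · intro j hj hne
      rw [hxlt j hj]
      by_cases hj0 : j = 0
      · subst hj0; rw [hu1 0 (by omega), h10]; simp
      rcases le_or_gt j K₀ with h | h
      · rw [hu1 j h]; exact Finset.mem_insert_of_mem (h1F j (by omega) h)
      · obtain ⟨k, rfl⟩ : ∃ k, j = k + (K₀ + 1) := ⟨j - (K₀ + 1), by omega⟩
        rw [hu2]; exact Finset.mem_insert_of_mem (h2F k (by omega) (by omega))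
  choose X hX1 hX2 hX3 using hper
  let φ : {b // Admissible A b} → {x : MarkovShift A // shift^[n] x = x ∧ x.1 0 = a} :=
    fun b => ⟨X b, hX1 b⟩
  have hφ : Function.Injective φ := by
    intro b c hbc
    have : X b = X c := congrArg Subtype.val hbc
    apply Subtype.ext
    rw [← hX2 b, ← hX2 c, this]
  have hsum := ((hP a haA).1 n (by omega)).comp_injective hφ
  have htend := hsum.tendsto_cofinite_zero
  let T : ℝ := ∑ j ∈ Finset.range n, if j = K₀ + 1 then t - D else B
  have hfin := htend.eventually (gt_mem_nhds (Real.exp_pos T))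
  rw [Filter.eventually_cofinite] at hfin
  refine ⟨hfin.toFinset.image Subtype.val, fun z hz => ?_⟩
  rw [Finset.mem_image]
  refine ⟨⟨z.1 0, z, rfl⟩, ?_, rfl⟩
  set b : {b // Admissible A b} := ⟨z.1 0, z, rfl⟩ with hb
  simp only [Set.Finite.mem_toFinset, Set.mem_ofPred_eq, not_lt, Function.comp]
  refine Real.exp_le_exp.2 ?_
  refine Finset.sum_le_sum fun j hj => ?_
  have hjn := Finset.mem_range.1 hj
  split_ifs with hjk
  · have h1 : z.1 0 = (shift^[j] (X b)).1 0 := by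
      rw [shift_iter_val, zero_add, hjk, hX2 b]
    have := hD' _ _ h1
    show t - D ≤ f (shift^[j] (X b))
    linarith
  · have h1 : (shift^[j] (X b)).1 0 = (X b).1 j := by
      rw [shift_iter_val, zero_add]
    exact (hB _ (hX3 b j hjn hjk)).trans (hBc _ _ h1)

theorem tendsto_telescope (h : ℕ → ℝ) (C : ℝ) (hC : ∀ n, |h n| ≤ C) :
    Tendsto (fun n : ℕ => ((n : ℝ) + 1)⁻¹ * ∑ k ∈ Finset.range (n + 1), (h k - h (k + 1)))
      atTop (𝓝 0) := by
  have h1 : Tendsto (fun n : ℕ => ((n : ℝ) + 1)⁻¹) atTop (𝓝 0) := by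
    simpa using tendsto_one_div_add_atTop_nhds_zero_nat (𝕜 := ℝ)
  refine h1.zero_mul_isBoundedUnder_le ?_
  refine ⟨2 * C, ?_⟩
  rw [Filter.eventually_map]
  refine Filter.Eventually.of_forall fun n => ?_
  simp only [Function.comp, Real.norm_eq_abs]
  rw [Finset.sum_range_sub']
  have := abs_sub (h 0) (h (n + 1))
  linarith [hC 0, hC (n + 1)]

theorem isCompact_box (G : ℕ → Finset ℕ) :
    IsCompact {z : MarkovShift A | ∀ i, z.1 i ∈ G i} := by
  have hcl : IsClosed {x : ℕ → ℕ | ∀ i, A (x i) (x (i + 1)) = true} := by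
    rw [Set.ofPred_forall]
    refine isClosed_iInter fun i => ?_
    have hc : Continuous fun x : ℕ → ℕ => A (x i) (x (i + 1)) := by
      have : Continuous fun q : ℕ × ℕ => A q.1 q.2 := continuous_of_discreteTopology
      have h2 : Continuous fun x : ℕ → ℕ => (x i, x (i + 1)) :=
        (continuous_apply i).prodMk (continuous_apply (i + 1))
      exact this.comp h2
    exact isClosed_eq hc continuous_const
  have hemb : IsClosedEmbedding (fun x : MarkovShift A => x.1) := hcl.isClosedEmbedding_subtypeVal
  have := hemb.isCompact_preimage
    (isCompact_univ_pi (fun i => (G i).finite_toSet.isCompact))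
  convert this using 1
  ext z
  simp

theorem isEmbedding_val : IsEmbedding (fun x : MarkovShift A => x.1) := IsEmbedding.subtypeVal

instance : T2Space (MarkovShift A) := isEmbedding_val.t2Space

instance : SecondCountableTopology (MarkovShift A) := isEmbedding_val.secondCountableTopology

instance : TopologicalSpace.MetrizableSpace (MarkovShift A) := isEmbedding_val.metrizableSpace

theorem exists_hit (hbip : FinitelyPrimitive A) {f : MarkovShift A → ℝ}
    (hWalters : SatisfiesWalters f) (hVar1 : Var1Finite f)
    {p : ℝ} (hP : HasGurevichPressure f p) {μmax : Measure (MarkovShift A)}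
    (huniq : ∀ ν', IsMaximizing f ν' → ν' = μmax)
    {a : MarkovShift A} (ha : a ∈ msupport μmax) {V : MarkovShift A → ℝ}
    (hVb : BoundedFun V) (y : ℕ → MarkovShift A)
    (hy : ∀ n, shift (y (n + 1)) = y n)
    (hV : ∀ n, f (y (n + 1)) + V (y (n + 1)) - V (y n) - mf f = 0) (m : ℕ) :
    ∃ n, 1 ≤ n ∧ y n ∈ cylOf a m := by
  classical
  by_contra hno
  push Not at hno
  have hfc := continuous_of_walters hWalters
  obtain ⟨C, hC⟩ := hVb
  obtain ⟨F, hF⟩ := coercive hbip hVar1 hP a (mf f - 2 * C)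
  have hyF : ∀ n, (y (n + 1)).1 0 ∈ F := by
    intro n
    apply hF
    have h1 := abs_le.1 (hC (y n))
    have h2 := abs_le.1 (hC (y (n + 1)))
    linarith [hV n, h1.1, h2.2]
  let G : ℕ → Finset ℕ := fun i => F ∪ (Finset.range (i + 1)).image (y 0).1
  let K : Set (MarkovShift A) := {z | ∀ i, z.1 i ∈ G i}
  have hKc : IsCompact K := isCompact_box G
  have hyK : ∀ n, y n ∈ K := by
    intro n
    induction n with
    | zero =>
      intro i
      exact Finset.mem_union_right _ (Finset.mem_image_of_mem _ (by simp))
    | succ n ih =>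
      intro i
      cases i with
      | zero => exact Finset.mem_union_left _ (hyF n)
      | succ i =>
        have h1 : (y (n + 1)).1 (i + 1) = (y n).1 i := by rw [← hy n]; rfl
        rw [h1]
        rcases Finset.mem_union.1 (ih i) with h | h
        · exact Finset.mem_union_left _ h
        · refine Finset.mem_union_right _ ?_
          obtain ⟨j, hj, hj'⟩ := Finset.mem_image.1 h
          refine Finset.mem_image.2 ⟨j, ?_, hj'⟩
          have := Finset.mem_range.1 hj
          exact Finset.mem_range.2 (by omega)
  haveI : CompactSpace K := isCompact_iff_compactSpace.1 hKc
  obtain ⟨ν, hν, L, hL, hLtop, hlim⟩ := exists_limit_measure (fun k => (⟨y (k + 1), hyK _⟩ : K))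
  let ν' : Measure (MarkovShift A) := ν.map Subtype.val
  have hmv : Measurable (Subtype.val : K → MarkovShift A) := measurable_subtype_coe
  have hν' : IsProbabilityMeasure ν' := Measure.isProbabilityMeasure_map hmv.aemeasurable
  have hg : ∀ g : MarkovShift A → ℝ, Continuous g →
      Tendsto (fun n : ℕ => ((n : ℝ) + 1)⁻¹ * ∑ k ∈ Finset.range (n + 1), g (y (k + 1)))
        L (𝓝 (∫ x, g x ∂ν')) := by
    intro g hgc
    have h1 := hlim ⟨fun z : K => g z.1, hgc.comp continuous_subtype_val⟩
    have h2 : ∫ x, g x ∂ν' = ∫ z : K, g z.1 ∂ν :=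
      integral_map hmv.aemeasurable hgc.stronglyMeasurable.aestronglyMeasurable
    rw [h2]
    exact h1
  have hinv : ν'.map shift = ν' := by
    have hms : Measurable (shift : MarkovShift A → MarkovShift A) := continuous_shift.measurable
    haveI : IsProbabilityMeasure (ν'.map shift) :=
      Measure.isProbabilityMeasure_map hms.aemeasurable
    refine ext_of_forall_integral_eq_of_IsFiniteMeasure fun g => ?_
    rw [integral_map hms.aemeasurable g.continuous.stronglyMeasurable.aestronglyMeasurable]
    have h1 := hg (fun x => g (shift x)) (g.continuous.comp continuous_shift)
    have h2 := hg g g.continuous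
    have h3 := (tendsto_telescope (fun k => g (y k)) ‖g‖
      (fun n => g.norm_coe_le_norm (y n))).mono_left hLtop
    have h4 := h2.add h3
    rw [add_zero] at h4
    refine tendsto_nhds_unique h1 (h4.congr fun n => ?_)
    rw [← mul_add, ← Finset.sum_add_distrib]
    simp [hy]
  have hfi : Integrable f ν' := by
    refine (integrable_map_measure hfc.stronglyMeasurable.aestronglyMeasurable
      hmv.aemeasurable).2 ?_
    exact (BoundedContinuousFunction.mkOfCompact
      ⟨fun z : K => f z.1, hfc.comp continuous_subtype_val⟩).integrable ν
  have hfm : ∫ x, f x ∂ν' = mf f := by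
    have h1 := hg f hfc
    have h3 := (tendsto_telescope (fun k => V (y k)) C (fun n => hC (y n))).mono_left hLtop
    have h4 := h3.const_add (mf f)
    rw [add_zero] at h4
    refine tendsto_nhds_unique h1 (h4.congr fun n => ?_)
    have h5 : ∀ k, f (y (k + 1)) = mf f + (V (y k) - V (y (k + 1))) := fun k => by
      linarith [hV k]
    simp only [h5]
    rw [Finset.sum_add_distrib, mul_add]
    congr 1
    have : ((n : ℝ) + 1) ≠ 0 := by positivity
    simp
    field_simp
  have heq : ν' = μmax := huniq ν' ⟨⟨hν', hinv⟩, hfi, hfm⟩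
  have hpos : 0 < ν' (cylOf a m) := by
    rw [heq]
    exact ha _ (isOpen_cylOf a m) (fun _ _ => rfl)
  have hcg : Continuous ((cylOf a m).indicator (fun _ : MarkovShift A => (1 : ℝ))) :=
    by
    refine continuous_const.indicator fun z hz => ?_
    rw [IsClopen.frontier_eq ⟨isClosed_cylOf a m, isOpen_cylOf a m⟩] at hz
    exact hz.elim
  have h1 := hg _ hcg
  have h2 : ∫ x, (cylOf a m).indicator (fun _ : MarkovShift A => (1 : ℝ)) x ∂ν' = 0 := by
    refine tendsto_nhds_unique h1 (tendsto_const_nhds.congr fun n => ?_)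
    symm
    rw [Finset.sum_eq_zero, mul_zero]
    intro k _
    exact Set.indicator_of_notMem (hno (k + 1) (by omega)) _
  rw [integral_indicator_const _ (isOpen_cylOf a m).measurableSet, smul_eq_mul, mul_one] at h2
  have h3 := (measureReal_eq_zero_iff (measure_ne_top _ _)).1 h2
  exact hpos.ne' h3

theorem manePot_eq (r : ℝ) (hr0 : 0 < r) (hr1 : r < 1)
    (hbip : FinitelyPrimitive A) {f : MarkovShift A → ℝ}
    (hWalters : SatisfiesWalters f) (hVar1 : Var1Finite f)
    {p : ℝ} (hP : HasGurevichPressure f p) {μmax : Measure (MarkovShift A)}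
    (huniq : ∀ ν', IsMaximizing f ν' → ν' = μmax)
    {a : MarkovShift A} (ha : a ∈ msupport μmax) {V : MarkovShift A → ℝ}
    (hV : IsCalibratedSubaction f V) (x : MarkovShift A) :
    manePot r f a x = ((V x - V a : ℝ) : EReal) := by
  obtain ⟨hVc, hVb, hVs, hVe⟩ := hV
  have hnear : ∀ δ > 0, ∃ m, ∀ z ∈ cylOf a m, |V z - V a| < δ := by
    intro δ hδ
    obtain ⟨m, hm⟩ := exists_cylOf_subset a {z | |V z - V a| < δ}
      (by
        have := Metric.tendsto_nhds.1 (hVc.tendsto a) δ hδ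
        simp only [Real.dist_eq] at this
        exact this)
    exact ⟨m, fun z hz => hm hz⟩
  apply le_antisymm
  · refine EReal.le_of_forall_lt_iff_le.1 fun c hc => ?_
    have hc' : V x - V a < c := by exact_mod_cast hc
    obtain ⟨m, hm⟩ := hnear (c - (V x - V a)) (by linarith)
    unfold manePot
    refine (iInf_le _ ⟨r ^ m, by positivity⟩).trans ?_
    refine iSup_le fun n => iSup_le fun z => ?_
    obtain ⟨z, hz1, hz2⟩ := z
    have h1 := birkhoff_le_of_subaction hVs n.1 z
    rw [hz2] at h1
    have h2 := abs_lt.1 (hm z (mem_cylOf_of_dist_lt hr0 hr1 hz1))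
    have : birkhoff (fun w => f w - mf f) n.1 z ≤ c := by linarith [h2.1]
    exact_mod_cast this
  · choose g hg1 hg2 using hVe
    let y : ℕ → MarkovShift A := fun n => g^[n] x
    have hy1 : ∀ n, shift (y (n + 1)) = y n := fun n => by
      simp only [y, Function.iterate_succ_apply', hg1]
    have hy2 : ∀ n, f (y (n + 1)) + V (y (n + 1)) - V (y n) - mf f = 0 := fun n => by
      have := hg2 (y n)
      rw [hg1] at this
      simpa only [y, Function.iterate_succ_apply'] using this
    unfold manePot
    refine le_iInf fun ε => ?_
    refine EReal.ge_of_forall_gt_iff_ge.1 fun c hc => ?_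
    have hc' : c < V x - V a := by exact_mod_cast hc
    obtain ⟨m, hm⟩ := hnear (V x - V a - c) (by linarith)
    obtain ⟨k, hk⟩ := exists_pow_lt_of_lt_one ε.2 hr1
    obtain ⟨n, hn1, hn⟩ := exists_hit hbip hWalters hVar1 hP huniq ha hVb y hy1 hy2 (max m k)
    obtain ⟨hb1, hb2⟩ := birkhoff_eq_of_backward y hy1 hy2 n
    have hd : dist' r a (y n) < ε.1 :=
      (dist_le_of_mem_cylOf hr0 hr1 (cylOf_mono a (le_max_right m k) hn)).trans_lt hk
    refine le_trans ?_ (le_iSup_of_le ⟨n, hn1⟩ (le_iSup_of_le ⟨y n, hd, hb2⟩ le_rfl))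
    have h2 := abs_lt.1 (hm _ (cylOf_mono a (le_max_left m k) hn))
    have : c ≤ birkhoff (fun w => f w - mf f) n (y n) := by
      rw [hb1]
      show c ≤ V x - V (y n)
      linarith [h2.2]
    exact_mod_cast this

theorem msupport_nonempty (μ : Measure (MarkovShift A)) [IsProbabilityMeasure μ] :
    ∃ a, a ∈ msupport μ := by
  have h : μ Set.univ ≠ 0 := by simp
  obtain ⟨a, -, ha⟩ := exists_mem_forall_mem_nhdsWithin_pos_measure h
  refine ⟨a, fun U hU haU => ha U ?_⟩
  exact mem_nhdsWithin_of_mem_nhds (hU.mem_nhds haU)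

end aux

end MarkovShift

namespace MarkovShift

/-- If the maximizing measure is unique then, for any `a` in its support and any bounded
calibrated sub-action `V`, `V(x) = V(a) + S_f(a,x)`; in particular any two bounded
calibrated sub-actions differ by a constant. -/
theorem calibrated_subactions_from_mane_potential
    (A : ℕ → ℕ → Bool) (r : ℝ) (hr0 : 0 < r) (hr1 : r < 1)
    (hmix : TopologicallyMixing A)
    (hbip : FinitelyPrimitive A)
    (f : MarkovShift A → ℝ)
    (hWalters : SatisfiesWalters f)
    (hVar1 : Var1Finite f)
    (p : ℝ)
    (hPfin : HasGurevichPressure f p)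
    (μmax : Measure (MarkovShift A))
    (hmax : IsMaximizing f μmax)
    (huniq : ∀ ν', IsMaximizing f ν' → ν' = μmax) :
    (∀ a ∈ msupport μmax, ∀ V : MarkovShift A → ℝ, IsCalibratedSubaction f V →
        ∀ x : MarkovShift A, ((V x : ℝ) : EReal) = ((V a : ℝ) : EReal) + manePot r f a x) ∧
      (∀ V₁ V₂ : MarkovShift A → ℝ, IsCalibratedSubaction f V₁ →
        IsCalibratedSubaction f V₂ → ∃ c : ℝ, ∀ x, V₁ x = V₂ x + c) := by
  have key := fun (a : MarkovShift A) (ha : a ∈ msupport μmax) (V : MarkovShift A → ℝ)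
      (hV : IsCalibratedSubaction f V) (x : MarkovShift A) =>
    manePot_eq r hr0 hr1 hbip hWalters hVar1 hPfin huniq ha hV x
  refine ⟨fun a ha V hV x => ?_, fun V₁ V₂ h₁ h₂ => ?_⟩
  · rw [key a ha V hV x, ← EReal.coe_add]
    congr 1
    ring
  · haveI := hmax.1.1
    obtain ⟨a, ha⟩ := msupport_nonempty μmax
    refine ⟨V₁ a - V₂ a, fun x => ?_⟩
    have h := (key a ha V₁ h₁ x).symm.trans (key a ha V₂ h₂ x)
    have h' : V₁ x - V₁ a = V₂ x - V₂ a := by exact_mod_cast h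
    linarith

end MarkovShift
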